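/- arXiv:2007.11480 — 6 statements merged into one kernel-verified Lean document; each statement's English description precedes it below -/
import Mathlib

section
/- Let β_H, β_R, β_U be positive reals with β_H + β_R + β_U = 1, let γ ∈ [0,1], and for x ∈ [0,1] set p = β_U + x·β_R and E(x) = (β_R/(β_R+β_H))·(1−p) + ((1−x)β_R/(β_H+(1−x)β_R))·(1−p)·γ + (xβ_R/(xβ_R+β_U))·p. Then for every x ∈ [0,1], E(x) = β_R · (1 + γ + (β_H/(β_H+β_R) − γ)·x). -/
/-- The rational miners' total expected fee return under safe depth `D = 1` at the tied
state `(1,1)`, when they shift fraction `x` of their power `βR` to the fork: the fork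
wins with probability `p = βU + x·βR`. -/
noncomputable def ratReturn (βH βR βU γ x : ℝ) : ℝ :=
  (βR / (βR + βH)) * (1 - (βU + x * βR))
    + ((1 - x) * βR / (βH + (1 - x) * βR)) * (1 - (βU + x * βR)) * γ
    + (x * βR / (x * βR + βU)) * (βU + x * βR)

/-- For positive mining powers `βH + βR + βU = 1`, `γ ∈ [0,1]` and every `x ∈ [0,1]`,
the rational miners' expected return satisfies
`E(x) = βR · (1 + γ + (βH/(βH+βR) − γ)·x)`. -/
theorem ratReturn_eq_affine (βH βR βU γ : ℝ) (hH : 0 < βH) (hR : 0 < βR) (hU : 0 < βU)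
    (hsum : βH + βR + βU = 1) (hγ0 : 0 ≤ γ) (hγ1 : γ ≤ 1) :
    ∀ x : ℝ, 0 ≤ x → x ≤ 1 →
      ratReturn βH βR βU γ x = βR * (1 + γ + (βH / (βH + βR) - γ) * x) := by
  intro x hx0 hx1
  have hq : 0 < βH + (1 - x) * βR := by nlinarith
  have hp : 0 < x * βR + βU := by positivity
  have hHR : 0 < βH + βR := by positivity
  -- Since the powers sum to one, `1 - p` is the denominator `βH + (1 - x) * βR` of the second
  -- term, and `p` is that of the third, so both fractions cancel.
  have h1 : 1 - (βU + x * βR) = βH + (1 - x) * βR := by linarith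
  unfold ratReturn
  rw [h1, add_comm βU, add_comm βR βH, div_mul_cancel₀ _ hq.ne', div_mul_cancel₀ _ hp.ne']
  field_simp
  ring
end

section
/- Let β_H, β_R, β_U be positive reals with β_H + β_R + β_U = 1, let γ ∈ [0,1], and for x ∈ [0,1] define E(x) = (β_R/(β_R+β_H))·(1−p) + ((1−x)β_R/(β_H+(1−x)β_R))·(1−p)·γ + (xβ_R/(xβ_R+β_U))·p with p = β_U + x·β_R. Then E(1) > E(0) if and only if γ < β_H/(1 − β_U); that is, rational miners strictly prefer joining the fork with all their mining power exactly when γ < β_H/(1−β_U). -/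
/-- For positive mining powers `βH + βR + βU = 1` and `γ ∈ [0,1]`, rational miners
strictly prefer joining the fork with all their mining power (`E(1) > E(0)`) exactly
when `γ < βH/(1 − βU)`. -/
theorem ratReturn_join_iff (βH βR βU γ : ℝ) (hH : 0 < βH) (hR : 0 < βR) (hU : 0 < βU)
    (hsum : βH + βR + βU = 1) (hγ0 : 0 ≤ γ) (hγ1 : γ ≤ 1) :
    ratReturn βH βR βU γ 1 > ratReturn βH βR βU γ 0 ↔ γ < βH / (1 - βU) := by
  obtain rfl : βU = 1 - βH - βR := by linarith
  have hHR : βH + βR ≠ 0 := by positivity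
  have hden : 1 - (1 - βH - βR) = βH + βR := by ring
  have h1 : βR + (1 - βH - βR) ≠ 0 := by linarith
  -- At `x = 1` the `γ` term vanishes, so `E(1) = βR + βR βH / (βH + βR)`;
  -- at `x = 0` the fork term vanishes, so `E(0) = βR + βR γ`.
  have key : ratReturn βH βR (1 - βH - βR) γ 1 - ratReturn βH βR (1 - βH - βR) γ 0
      = βR * (βH / (βH + βR) - γ) := by
    have e1 : ratReturn βH βR (1 - βH - βR) γ 1 = βR + βR * (βH / (βH + βR)) := by
      unfold ratReturn
      rw [one_mul, add_comm (1 - βH - βR) βR, div_mul_cancel₀ _ h1, add_comm βR βH]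
      ring
    have e0 : ratReturn βH βR (1 - βH - βR) γ 0 = βR + βR * γ := by
      unfold ratReturn
      simp only [zero_mul, add_zero, sub_zero, one_mul, zero_div, hden]
      rw [add_comm βR βH, div_mul_cancel₀ _ hHR]
    rw [e1, e0]
    ring
  rw [hden, gt_iff_lt, ← sub_pos, key, mul_pos_iff_of_pos_left hR, sub_pos]
end

section
/- Let β_U, β_H, β_R, γ be reals with 0 < β_U ≤ β_H, β_R = 1 − β_H − β_U > 0, and β_U/(1−β_U) ≤ γ < min(β_H/(1−β_U), β_U/β_H). Then both of the following hold: (i) E(1) > E(0), where E(x) = (β_R/(β_R+β_H))·(1−p) + ((1−x)β_R/(β_H+(1−x)β_R))·(1−p)·γ + (xβ_R/(xβ_R+β_U))·p with p = β_U + x·β_R, so rational miners prefer joining the fork; and (ii) (γ + β_U/(1−β_H)) · β_U · (1−β_H) > β_U · γ, so the undercutter's expected return from undercutting exceeds its return from extending the main chain. -/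
/-- Under safe depth `D = 1` with a sufficient bandwidth set, if `0 < βU ≤ βH`,
`βR = 1 − βH − βU > 0` and `βU/(1−βU) ≤ γ < min(βH/(1−βU), βU/βH)`, then (i) rational
miners strictly prefer joining the fork (`E(1) > E(0)`), and (ii) the undercutter's
expected return `(γ + βU/(1−βH)) · βU · (1−βH)` exceeds its return `βU·γ` from
extending the main chain. -/
theorem undercut_profitable_sufficient_bandwidth (βU βH βR γ : ℝ)
    (hU : 0 < βU) (hUH : βU ≤ βH) (hRdef : βR = 1 - βH - βU) (hR : 0 < βR)
    (hγlo : βU / (1 - βU) ≤ γ) (hγhi : γ < min (βH / (1 - βU)) (βU / βH)) :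
    ratReturn βH βR βU γ 1 > ratReturn βH βR βU γ 0 ∧
      (γ + βU / (1 - βH)) * βU * (1 - βH) > βU * γ := by
  obtain ⟨h1, h2⟩ := lt_min_iff.mp hγhi
  have hH : 0 < βH := lt_of_lt_of_le hU hUH
  rw [lt_div_iff₀ hH] at h2
  constructor
  -- `E(1) = βR·βH/(1-βU) + βR` and `E(0) = βR + βR·γ`, so `E(1) > E(0)` is `γ < βH/(1-βU)`.
  · have e1 : ratReturn βH βR βU γ 1 = βR * (βH / (1 - βU)) + βR := by
      have hs : 1 - βU = βR + βH := by linarith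
      have hp : 1 - (βU + 1 * βR) = βH := by linarith
      have hne : 1 * βR + βU ≠ 0 := by linarith
      unfold ratReturn
      rw [hp, hs, add_comm βU (1 * βR), div_mul_cancel₀ _ hne]
      ring
    have e0 : ratReturn βH βR βU γ 0 = βR + βR * γ := by
      have hp : 1 - (βU + 0 * βR) = βR + βH := by linarith
      have hne : βR + βH ≠ 0 := by linarith
      unfold ratReturn
      rw [hp, sub_zero, one_mul, add_comm βH βR, div_mul_cancel₀ _ hne]
      ring
    rw [e1, e0]
    linarith [mul_lt_mul_of_pos_left h1 hR]
  -- The difference of the two sides is `βU·(βU - γ·βH)`.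
  · have hne : 1 - βH ≠ 0 := by linarith
    have e : (γ + βU / (1 - βH)) * βU * (1 - βH) = βU * γ + βU * (βU - γ * βH) := by
      field_simp
      ring
    rw [e]
    linarith [mul_pos hU (sub_pos.mpr h2)]
end

section
/- Let β ∈ (0,1) and γ ≥ 0. Then (2γ + β) · ∑_{i=0}^{∞} β^{i+2} (1−β)^i = β²(2γ+β)/(1 − β(1−β)), and this quantity is strictly greater than 2βγ if and only if γ < β²/(2(1−β)²) (equivalently γ < β²/(2 − 4β + 2β²)). -/
/-!
The series is `β ^ 2` times the geometric series of ratio `β * (1 - β) ∈ [0, 1)`, which gives the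
closed form. For the threshold, the cross-multiplied difference of the two returns factors as
`β ^ 2 * (2 * γ + β) - 2 * β * γ * (1 - β * (1 - β)) = β * (β ^ 2 - γ * (2 * (1 - β) ^ 2))`,
so its sign is that of the second factor.
-/

/-- Under safe depth `D = 2`, for an undercutter with mining power `β ∈ (0,1)` attacking
without rational miners joining, the expected return
`(2γ + β) · ∑_{i=0}^∞ β^(i+2) (1−β)^i` equals `β²(2γ+β)/(1 − β(1−β))`, and this
quantity strictly exceeds the no-attack return `2βγ` if and only if
`γ < β²/(2(1−β)²)` (equivalently `γ < β²/(2 − 4β + 2β²)`). -/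
theorem undercut_depth_two_profitable_iff (β γ : ℝ) (hβ0 : 0 < β) (hβ1 : β < 1)
    (hγ : 0 ≤ γ) :
    (2 * γ + β) * (∑' i : ℕ, β ^ (i + 2) * (1 - β) ^ i)
        = β ^ 2 * (2 * γ + β) / (1 - β * (1 - β)) ∧
      (β ^ 2 * (2 * γ + β) / (1 - β * (1 - β)) > 2 * β * γ ↔
        γ < β ^ 2 / (2 * (1 - β) ^ 2)) ∧
      (β ^ 2 * (2 * γ + β) / (1 - β * (1 - β)) > 2 * β * γ ↔
        γ < β ^ 2 / (2 - 4 * β + 2 * β ^ 2)) := by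
  have hr0 : 0 ≤ β * (1 - β) := mul_nonneg hβ0.le (by linarith)
  have hr1 : β * (1 - β) < 1 := by nlinarith
  have hden : 0 < 1 - β * (1 - β) := by linarith
  have hsq : 0 < 2 * (1 - β) ^ 2 := by
    have : 0 < 1 - β := by linarith
    positivity
  have key : β ^ 2 * (2 * γ + β) / (1 - β * (1 - β)) > 2 * β * γ ↔
      γ < β ^ 2 / (2 * (1 - β) ^ 2) := by
    rw [gt_iff_lt, lt_div_iff₀ hden, lt_div_iff₀ hsq, ← sub_pos,
      show β ^ 2 * (2 * γ + β) - 2 * β * γ * (1 - β * (1 - β))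
        = β * (β ^ 2 - γ * (2 * (1 - β) ^ 2)) by ring,
      mul_pos_iff_of_pos_left hβ0, sub_pos]
  refine ⟨?_, key, ?_⟩
  · have hterm : ∀ i : ℕ, β ^ (i + 2) * (1 - β) ^ i = β ^ 2 * (β * (1 - β)) ^ i := by
      intro i
      rw [mul_pow]
      ring
    simp_rw [hterm]
    rw [tsum_mul_left, tsum_geometric_of_lt_one hr0 hr1]
    ring
  · rw [show 2 - 4 * β + 2 * β ^ 2 = 2 * (1 - β) ^ 2 by ring]
    exact key
end

section
/- Let β_U ∈ (0, 1/2), β_H ≥ 0, β_R > 0 with β_H + β_R + β_U = 1, and γ ≥ 0. Define p_m(x) = β_U(1−β_U−xβ_R)² and p_f(x) = β_U(β_U+xβ_R)(β_U+xβ_R+β_H), and E₂(x) = (β_R/(β_R+β_H))·p_m(x) + ((1−x)β_R/(β_H+(1−x)β_R))·2γ·p_m(x) + (xβ_R/(xβ_R+β_U))·γ·p_f(x) + (xβ_R/(xβ_R+β_U+β_H))·p_f(x). Then E₂(0) < E₂(1) if and only if γ·(1−2β_U) < β_H²/(1−β_U) + β_U − β_H, i.e., if and only if γ < (β_H²/(1−β_U)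 + β_U − β_H)/(1 − 2β_U). -/
/-! Once `βR = 1 - βU - βH` is substituted, all denominators other than `1 - βU` cancel, and
`E₂(1) - E₂(0) = βR βU · ((βH² / (1 - βU) + βU - βH) - γ (1 - 2 βU))`. Since `βR βU > 0`, the sign
of the left side is that of the last factor, which gives the first criterion; dividing by
`1 - 2 βU > 0` gives the second. -/

/-- Probability (leftmost path) that the main chain leads by 2 blocks first, under safe
depth `D = 2`, when rational miners shift fraction `x` of their power to the fork. -/
noncomputable def pMain (βR βU x : ℝ) : ℝ := βU * (1 - βU - x * βR) ^ 2

/-- Probability (rightmost path) that the fork leads by 2 blocks first, under safe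
depth `D = 2`, when rational miners shift fraction `x` of their power to the fork. -/
noncomputable def pFork (βH βR βU x : ℝ) : ℝ := βU * (βU + x * βR) * (βU + x * βR + βH)

/-- Rational miners' total expected fee return under safe depth `D = 2`, when they
shift fraction `x` of their power to the fork. -/
noncomputable def ratReturn2 (βH βR βU γ x : ℝ) : ℝ :=
  (βR / (βR + βH)) * pMain βR βU x
    + ((1 - x) * βR / (βH + (1 - x) * βR)) * (2 * γ) * pMain βR βU x
    + (x * βR / (x * βR + βU)) * γ * pFork βH βR βU x
    + (x * βR / (x * βR + βU + βH)) * pFork βH βR βU x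

/-- At `x = 1` the second summand of `ratReturn2` vanishes because its numerator does, so the
possibly zero denominator `βH` is harmless. -/
theorem ratReturn2_one_sub_zero (βH βR βU γ : ℝ) (hU0 : 0 < βU) (hH : 0 ≤ βH) (hR : 0 < βR)
    (hsum : βH + βR + βU = 1) :
    ratReturn2 βH βR βU γ 1 - ratReturn2 βH βR βU γ 0 =
      βR * βU * ((βH ^ 2 / (1 - βU) + βU - βH) - γ * (1 - 2 * βU)) := by
  have hS : βR + βH ≠ 0 := by positivity
  have hF : βR + βU ≠ 0 := by positivity
  have h1U : 1 - βU = βR + βH := by linarith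
  have h2U : 1 - 2 * βU = 2 * (βR + βH) - 1 := by linarith
  have h1 : βR + βU + βH = 1 := by linarith
  have h2 : βU + βR + βH = 1 := by linarith
  have e0 : ratReturn2 βH βR βU γ 0 = βR * βU * (βR + βH) * (1 + 2 * γ) := by
    simp only [ratReturn2, pMain, h1U, zero_mul, sub_zero, one_mul, zero_div, add_zero,
      add_comm βH βR]
    field_simp
  have e1 : ratReturn2 βH βR βU γ 1 =
      βR * βU * (βH ^ 2 / (βR + βH) + γ + (βU + βR)) := by
    simp only [ratReturn2, pMain, pFork, h1U, sub_self, zero_mul, zero_div, one_mul, add_zero,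
      h1, h2, add_sub_cancel_left, div_one, mul_one]
    field_simp
    ring
  rw [e0, e1, h1U, h2U]
  ring

/-- For `βU ∈ (0, 1/2)`, `βH ≥ 0`, `βR > 0` with `βH + βR + βU = 1` and `γ ≥ 0`,
rational miners strictly prefer shifting all their power to the fork
(`E₂(0) < E₂(1)`) if and only if `γ·(1−2βU) < βH²/(1−βU) + βU − βH`, i.e. if and only
if `γ < (βH²/(1−βU) + βU − βH)/(1 − 2βU)`. -/
theorem ratReturn2_join_iff (βH βR βU γ : ℝ) (hU0 : 0 < βU) (hU1 : βU < 1 / 2)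
    (hH : 0 ≤ βH) (hR : 0 < βR) (hsum : βH + βR + βU = 1) (hγ : 0 ≤ γ) :
    (ratReturn2 βH βR βU γ 0 < ratReturn2 βH βR βU γ 1 ↔
        γ * (1 - 2 * βU) < βH ^ 2 / (1 - βU) + βU - βH) ∧
      (ratReturn2 βH βR βU γ 0 < ratReturn2 βH βR βU γ 1 ↔
        γ < (βH ^ 2 / (1 - βU) + βU - βH) / (1 - 2 * βU)) := by
  have key := ratReturn2_one_sub_zero βH βR βU γ hU0 hH hR hsum
  have hRU : 0 < βR * βU := mul_pos hR hU0
  have first : ratReturn2 βH βR βU γ 0 < ratReturn2 βH βR βU γ 1 ↔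
      γ * (1 - 2 * βU) < βH ^ 2 / (1 - βU) + βU - βH := by
    rw [← sub_pos, key, mul_pos_iff_of_pos_left hRU, sub_pos]
  exact ⟨first, first.trans (lt_div_iff₀ (by linarith)).symm⟩
end

section
/- Let β_U = 1/2, β_H ≥ 0, β_R > 0 with β_H + β_R + β_U = 1, and γ ≥ 0. With p_m(x) = β_U(1−β_U−xβ_R)², p_f(x) = β_U(β_U+xβ_R)(β_U+xβ_R+β_H), and E₂(x) = (β_R/(β_R+β_H))·p_m(x) + ((1−x)β_R/(β_H+(1−x)β_R))·2γ·p_m(x) + (xβ_R/(xβ_R+β_U))·γ·p_f(x) + (xβ_R/(xβ_R+β_U+β_H))·p_f(x), the inequality E₂(0) < E₂(1) holds regardless of the value of γ. -/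
/-- For `βU = 1/2`, `βH ≥ 0`, `βR > 0` with `βH + βR + βU = 1`, the inequality
`E₂(0) < E₂(1)` holds regardless of the value of `γ ≥ 0`. -/
theorem ratReturn2_join_of_half (βH βR βU γ : ℝ) (hU : βU = 1 / 2)
    (hH : 0 ≤ βH) (hR : 0 < βR) (hsum : βH + βR + βU = 1) (hγ : 0 ≤ γ) :
    ratReturn2 βH βR βU γ 0 < ratReturn2 βH βR βU γ 1 := by
  obtain rfl : βH = 1 / 2 - βR := by linarith
  subst hU
  have h0 : ratReturn2 (1 / 2 - βR) βR (1 / 2) γ 0 = βR / 4 + γ * βR / 2 := by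
    have e1 : βR + (1 / 2 - βR) = 1 / 2 := by ring
    have e2 : 1 / 2 - βR + (1 - 0) * βR = 1 / 2 := by ring
    simp only [ratReturn2, pMain, pFork, e1, e2]
    ring
  have h1 : ratReturn2 (1 / 2 - βR) βR (1 / 2) γ 1
      = βR * (1 / 2 - βR) ^ 2 + γ * βR / 2 + βR / 4 + βR ^ 2 / 2 := by
    have e1 : βR + (1 / 2 - βR) = 1 / 2 := by ring
    have e2 : 1 * βR + 1 / 2 + (1 / 2 - βR) = 1 := by ring
    have e3 : 1 / 2 + 1 * βR + (1 / 2 - βR) = 1 := by ring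
    -- At `x = 1` the numerator `(1 - x) * βR` is zero, so the second term vanishes even when
    -- its denominator `βH` is zero.
    have e4 : (1 - 1) * βR = 0 := by ring
    have e5 : βR / (1 * βR + 1 / 2) * (1 / 2 + 1 * βR) = βR := by
      have : 1 * βR + 1 / 2 ≠ 0 := by positivity
      rw [add_comm (1 / 2), div_mul_cancel₀ _ this]
    simp only [ratReturn2, pMain, pFork, e1, e2, e3, e4, zero_div, zero_mul]
    linear_combination γ / 2 * e5
  rw [h0, h1]
  have : 0 ≤ βR * (1 / 2 - βR) ^ 2 := by positivity
  have : 0 < βR ^ 2 := by positivity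
  linarith
end
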